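/- arXiv:2012.08873 — 6 statements merged into one kernel-verified Lean document; each statement's English description precedes it below -/
import Mathlib

section
/- Fix polynomials g_1,…,g_m and h_1,…,h_l in ℝ[x] and an integer k ≥ max{⌈g_i⌉, ⌈h_j⌉}. Suppose a_k > 0 admits a representation a_k = v_k^T G_0 v_k + Σ_{i=1}^m g_i · v_{k-⌈g_i⌉}^T G_i v_{k-⌈g_i⌉} + Σ_{j=1}^l h_j ψ_j in ℝ[x], where each G_i is a symmetric positive definite matrix (G_0 indexed by ℕ^n_k, G_i indexed by ℕ^n_{k-⌈g_i⌉}) and each ψ_j is a polynomial of degree at most 2(k−⌈h_j⌉). Then every real sequence y = (y_α)_{α∈ℕ^n_{2k}} with y_0 = 1 and M_{k-⌈h_j⌉}(h_j·y) = 0 for all j ∈ {1,…,l} satisfies trace(M_k(y)·G_0) + Σ_{i=1}^m trace(M_{k-⌈g_i⌉}(g_i·y)·G_i) = a_k; equivalently, trace(P_k D_k(y) P_k) = a_k where D_k(y) := diag(M_k(y), M_{k-⌈g_1⌉}(g_1·y),…, M_{k-⌈g_m⌉}(g_m·y)) and P_k := diag(G_0^{1/2},…,G_m^{1/2}). -/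
open MvPolynomial

/-- `⌈p⌉ := ⌈deg(p)/2⌉`. -/
noncomputable def halfCeil {n : ℕ} (p : MvPolynomial (Fin n) ℝ) : ℕ :=
  (p.totalDegree + 1) / 2

/-- The finite set `ℕ^n_d` of multi-indices `α ∈ ℕ^n` with `|α| ≤ d`. -/
noncomputable def degLE (n d : ℕ) : Finset (Fin n →₀ ℕ) :=
  (Finset.Iic (Finsupp.equivFunOnFinite.symm fun _ : Fin n => d)).filter
    fun α => (∑ i, α i) ≤ d

/-- The polynomial `v_d^T G v_d = Σ_{α,β ∈ ℕ^n_d} G_{α,β} x^{α+β}` associated with a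
matrix `G` indexed by `ℕ^n_d`. -/
noncomputable def quadForm (n d : ℕ)
    (G : Matrix ↥(degLE n d) ↥(degLE n d) ℝ) : MvPolynomial (Fin n) ℝ :=
  ∑ α : ↥(degLE n d), ∑ β : ↥(degLE n d), monomial (α.1 + β.1) (G α β)

/-- The moment matrix `M_d(y)`, with entries `(M_d(y))_{α,β} = y_{α+β}`. -/
noncomputable def momentMat (n d : ℕ) (y : (Fin n →₀ ℕ) → ℝ) :
    Matrix ↥(degLE n d) ↥(degLE n d) ℝ :=
  Matrix.of fun α β => y (α.1 + β.1)

/-- The localizing matrix `M_d(q·y)`, with entries `Σ_γ q_γ y_{α+β+γ}`. -/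
noncomputable def locMat (n d : ℕ) (q : MvPolynomial (Fin n) ℝ)
    (y : (Fin n →₀ ℕ) → ℝ) : Matrix ↥(degLE n d) ↥(degLE n d) ℝ :=
  Matrix.of fun α β => ∑ γ ∈ q.support, coeff γ q * y (α.1 + β.1 + γ)

lemma mem_degLE {n d : ℕ} {α : Fin n →₀ ℕ} : α ∈ degLE n d ↔ ∑ i, α i ≤ d := by
  unfold degLE
  simp only [Finset.mem_filter, Finset.mem_Iic, and_iff_right_iff_imp]
  intro h i
  exact (Finset.single_le_sum (f := fun i => α i) (fun _ _ => Nat.zero_le _)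
    (Finset.mem_univ i)).trans h

lemma split_aux {n : ℕ} (d e : ℕ) : ∀ s : Fin n →₀ ℕ, ∑ i, s i ≤ d + e →
    ∃ α β : Fin n →₀ ℕ, α + β = s ∧ ∑ i, α i ≤ d ∧ ∑ i, β i ≤ e := by
  induction d with
  | zero => intro s hs; exact ⟨0, s, by simp, by simp, by simpa using hs⟩
  | succ d ih =>
    intro s hs
    by_cases h0 : s = 0
    · exact ⟨0, 0, by simp [h0], by simp, by simp⟩
    · obtain ⟨i, hi⟩ := Finsupp.ne_iff.mp h0
      have hi' : Finsupp.single i 1 ≤ s := by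
        rw [Finsupp.single_le_iff]; exact Nat.one_le_iff_ne_zero.mpr hi
      obtain ⟨t, rfl⟩ := exists_add_of_le hi'
      have h1 : ∑ j, (Finsupp.single i 1 : Fin n →₀ ℕ) j = 1 := by
        simp [Finsupp.single_apply]
      simp only [Finsupp.add_apply, Finset.sum_add_distrib] at hs
      rw [h1] at hs
      obtain ⟨α, β, hab, ha, hb⟩ := ih t (by omega)
      refine ⟨Finsupp.single i 1 + α, β, by rw [add_assoc, hab], ?_, hb⟩
      simp only [Finsupp.add_apply, Finset.sum_add_distrib]
      rw [h1]; omega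

/-- The Riesz functional. -/
noncomputable def riesz {n : ℕ} (y : (Fin n →₀ ℕ) → ℝ) : MvPolynomial (Fin n) ℝ →ₗ[ℝ] ℝ :=
  (MvPolynomial.basisMonomials (Fin n) ℝ).constr ℝ y

lemma riesz_monomial {n : ℕ} (y : (Fin n →₀ ℕ) → ℝ) (s : Fin n →₀ ℕ) (c : ℝ) :
    riesz y (monomial s c) = c * y s := by
  have h1 : riesz y (monomial s 1) = y s := by
    have := (MvPolynomial.basisMonomials (Fin n) ℝ).constr_basis ℝ y s
    simpa [riesz] using this
  have h2 : (monomial s c : MvPolynomial (Fin n) ℝ) = c • monomial s 1 := by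
    simp [smul_monomial]
  rw [h2, map_smul, h1, smul_eq_mul]

lemma riesz_mul_monomial {n : ℕ} (y : (Fin n →₀ ℕ) → ℝ) (q : MvPolynomial (Fin n) ℝ)
    (s : Fin n →₀ ℕ) (c : ℝ) :
    riesz y (q * monomial s c) = (∑ γ ∈ q.support, coeff γ q * y (s + γ)) * c := by
  conv_lhs => rw [q.as_sum]
  rw [Finset.sum_mul, map_sum, Finset.sum_mul]
  refine Finset.sum_congr rfl fun γ _ => ?_
  rw [monomial_mul, riesz_monomial, add_comm γ s]; ring

lemma posDef_apply_comm {ι : Type*} {G : Matrix ι ι ℝ} (hG : G.PosDef) (α β : ι) :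
    G α β = G β α := by
  simpa using hG.isHermitian.apply β α

lemma riesz_quad {n d : ℕ} (y : (Fin n →₀ ℕ) → ℝ) (G : Matrix ↥(degLE n d) ↥(degLE n d) ℝ)
    (hG : G.PosDef) : riesz y (quadForm n d G) = (momentMat n d y * G).trace := by
  simp only [quadForm, map_sum, riesz_monomial, Matrix.trace, Matrix.diag, Matrix.mul_apply,
    momentMat, Matrix.of_apply]
  refine Finset.sum_congr rfl fun α _ => Finset.sum_congr rfl fun β _ => ?_
  rw [posDef_apply_comm hG α β, mul_comm]

lemma riesz_mul_quad {n d : ℕ} (y : (Fin n →₀ ℕ) → ℝ) (q : MvPolynomial (Fin n) ℝ)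
    (G : Matrix ↥(degLE n d) ↥(degLE n d) ℝ)
    (hG : G.PosDef) : riesz y (q * quadForm n d G) = (locMat n d q y * G).trace := by
  simp only [quadForm, Finset.mul_sum, map_sum, riesz_mul_monomial, Matrix.trace, Matrix.diag,
    Matrix.mul_apply, locMat, Matrix.of_apply]
  refine Finset.sum_congr rfl fun α _ => Finset.sum_congr rfl fun β _ => ?_
  rw [posDef_apply_comm hG α β]

lemma riesz_mul_zero {n d : ℕ} (y : (Fin n →₀ ℕ) → ℝ) (q p : MvPolynomial (Fin n) ℝ)
    (hp : p.totalDegree ≤ 2 * d) (h0 : locMat n d q y = 0) : riesz y (q * p) = 0 := by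
  rw [p.as_sum, Finset.mul_sum, map_sum]
  refine Finset.sum_eq_zero fun s hs => ?_
  have hs' : ∑ i, s i ≤ d + d := by
    have := (le_totalDegree hs).trans hp
    rw [Finsupp.sum_fintype _ _ (fun _ => rfl)] at this
    omega
  obtain ⟨α, β, rfl, ha, hb⟩ := split_aux d d s hs'
  have := congrFun (congrFun h0 ⟨α, mem_degLE.mpr ha⟩) ⟨β, mem_degLE.mpr hb⟩
  simp only [locMat, Matrix.of_apply, Matrix.zero_apply] at this
  rw [riesz_mul_monomial, this, zero_mul]

/-- If `a_k > 0` has a representation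
`a_k = v_k^T G_0 v_k + Σ_i g_i · v_{k-⌈g_i⌉}^T G_i v_{k-⌈g_i⌉} + Σ_j h_j ψ_j`
with each `G_i` symmetric positive definite and `deg ψ_j ≤ 2(k−⌈h_j⌉)`, then every sequence
`y` with `y_0 = 1` and vanishing localizing matrices of the `h_j` satisfies
`trace(M_k(y)·G_0) + Σ_i trace(M_{k-⌈g_i⌉}(g_i·y)·G_i) = a_k`. -/
theorem stmt1 (n m l : ℕ)
    (g : Fin m → MvPolynomial (Fin n) ℝ) (h : Fin l → MvPolynomial (Fin n) ℝ)
    (k : ℕ) (hkg : ∀ i, halfCeil (g i) ≤ k) (hkh : ∀ j, halfCeil (h j) ≤ k)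
    (a : ℝ) (ha : 0 < a)
    (G0 : Matrix ↥(degLE n k) ↥(degLE n k) ℝ) (hG0 : G0.PosDef)
    (G : ∀ i : Fin m,
      Matrix ↥(degLE n (k - halfCeil (g i))) ↥(degLE n (k - halfCeil (g i))) ℝ)
    (hG : ∀ i, (G i).PosDef)
    (ψ : Fin l → MvPolynomial (Fin n) ℝ)
    (hψ : ∀ j, (ψ j).totalDegree ≤ 2 * (k - halfCeil (h j)))
    (hrep : (C a : MvPolynomial (Fin n) ℝ)
      = quadForm n k G0 + (∑ i, g i * quadForm n (k - halfCeil (g i)) (G i))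
        + ∑ j, h j * ψ j) :
    ∀ y : (Fin n →₀ ℕ) → ℝ, y 0 = 1 →
      (∀ j, locMat n (k - halfCeil (h j)) (h j) y = 0) →
      (momentMat n k y * G0).trace
        + (∑ i, (locMat n (k - halfCeil (g i)) (g i) y * G i).trace) = a := by
  intro y hy hloc
  have key := congrArg (riesz y) hrep
  rw [map_add, map_add, map_sum, map_sum, riesz_quad y G0 hG0] at key
  rw [Finset.sum_eq_zero (s := Finset.univ) (f := fun j => riesz y (h j * ψ j))
    (fun j _ => riesz_mul_zero y (h j) (ψ j) (hψ j) (hloc j)), add_zero] at key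
  rw [Finset.sum_congr rfl (fun i _ => riesz_mul_quad y (g i) (G i) (hG i))] at key
  rw [← key, ← monomial_zero', riesz_monomial, hy, mul_one]
end

section
/- Fix polynomials g_1,…,g_m ∈ ℝ[x] such that the set S(g) := {x ∈ ℝⁿ : g_i(x) ≥ 0 for all i} has nonempty interior, and fix an integer k ≥ max_i ⌈g_i⌉. Suppose a > 0 and symmetric positive definite matrices Q_0 (indexed by ℕ^n_k) and Q_i (indexed by ℕ^n_{k-⌈g_i⌉}), i ∈ {1,…,m}, are such that every real sequence y = (y_α)_{α∈ℕ^n_{2k}} with y_0 = 1 satisfies trace(M_k(y)·Q_0) + Σ_{i=1}^m trace(M_{k-⌈g_i⌉}(g_i·y)·Q_i) = a. Then the polynomial v_k^T Q_0 v_k + Σ_{i=1}^m g_i · v_{k-⌈g_i⌉}^T Q_i v_{k-⌈g_i⌉} is identically equal to the constant a; consequently, for every c > 0 there exist symmetric positive definite matrices G_0,…,G_m (of the same respective index sets) with c = v_k^T G_0 v_k + Σ_{i=1}^m g_i · v_{k-⌈g_i⌉}^T G_i v_{k-⌈g_i⌉}. -/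
open MvPolynomial

lemma evalMon_add {n : ℕ} (x : Fin n → ℝ) (a b : Fin n →₀ ℕ) :
    eval x (monomial (a + b) (1 : ℝ)) = eval x (monomial a (1 : ℝ)) * eval x (monomial b (1 : ℝ)) := by
  rw [← map_mul, monomial_mul, one_mul]

lemma evalMon_smul {n : ℕ} (x : Fin n → ℝ) (a : Fin n →₀ ℕ) (r : ℝ) :
    eval x (monomial a r) = r * eval x (monomial a (1 : ℝ)) := by
  simp [eval_monomial]

lemma trace_moment {n d : ℕ} (x : Fin n → ℝ) (G : Matrix ↥(degLE n d) ↥(degLE n d) ℝ) :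
    (momentMat n d (fun α => eval x (monomial α (1 : ℝ))) * G).trace
      = eval x (quadForm n d G) := by
  simp only [Matrix.trace, Matrix.diag, Matrix.mul_apply, momentMat, Matrix.of_apply, quadForm,
    map_sum]
  rw [Finset.sum_comm]
  refine Finset.sum_congr rfl fun α _ => Finset.sum_congr rfl fun β _ => ?_
  rw [evalMon_smul x _ (G α β), add_comm, mul_comm]

lemma trace_loc {n d : ℕ} (x : Fin n → ℝ) (q : MvPolynomial (Fin n) ℝ)
    (G : Matrix ↥(degLE n d) ↥(degLE n d) ℝ) :
    (locMat n d q (fun α => eval x (monomial α (1 : ℝ))) * G).trace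
      = eval x (q * quadForm n d G) := by
  have h : locMat n d q (fun α => eval x (monomial α (1 : ℝ)))
      = eval x q • momentMat n d (fun α => eval x (monomial α (1 : ℝ))) := by
    ext α β
    simp only [locMat, momentMat, Matrix.of_apply, Matrix.smul_apply, smul_eq_mul]
    conv_rhs => rw [q.as_sum, map_sum, Finset.sum_mul]
    refine Finset.sum_congr rfl fun γ _ => ?_
    rw [evalMon_smul x γ (coeff γ q), evalMon_add x (α.1 + β.1) γ]
    ring
  rw [h, Matrix.smul_mul, Matrix.trace_smul, trace_moment, map_mul, smul_eq_mul]

lemma quadForm_smul {n d : ℕ} (r : ℝ) (G : Matrix ↥(degLE n d) ↥(degLE n d) ℝ) :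
    quadForm n d (r • G) = C r * quadForm n d G := by
  unfold quadForm
  rw [Finset.mul_sum]
  refine Finset.sum_congr rfl fun α _ => ?_
  rw [Finset.mul_sum]
  refine Finset.sum_congr rfl fun β _ => ?_
  rw [C_mul_monomial, Matrix.smul_apply, smul_eq_mul]

lemma posDef_scale {n d : ℕ} (r : ℝ) (hr : 0 < r) (G : Matrix ↥(degLE n d) ↥(degLE n d) ℝ)
    (hG : G.PosDef) : (r • G).PosDef := hG.smul hr

/-- Suppose `S(g)` has nonempty interior and `a > 0` together with symmetric
positive definite `Q_0, …, Q_m` are such that every `y` with `y_0 = 1` satisfies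
`trace(M_k(y)·Q_0) + Σ_i trace(M_{k-⌈g_i⌉}(g_i·y)·Q_i) = a`.  Then
`v_k^T Q_0 v_k + Σ_i g_i · v_{k-⌈g_i⌉}^T Q_i v_{k-⌈g_i⌉} = a` as polynomials, and for every
`c > 0` there are symmetric positive definite `G_0, …, G_m` with
`c = v_k^T G_0 v_k + Σ_i g_i · v_{k-⌈g_i⌉}^T G_i v_{k-⌈g_i⌉}`. -/
theorem stmt2 (n m : ℕ) (g : Fin m → MvPolynomial (Fin n) ℝ)
    (hint : (interior {x : Fin n → ℝ | ∀ i, 0 ≤ eval x (g i)}).Nonempty)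
    (k : ℕ) (hk : ∀ i, halfCeil (g i) ≤ k)
    (a : ℝ) (ha : 0 < a)
    (Q0 : Matrix ↥(degLE n k) ↥(degLE n k) ℝ) (hQ0 : Q0.PosDef)
    (Q : ∀ i : Fin m,
      Matrix ↥(degLE n (k - halfCeil (g i))) ↥(degLE n (k - halfCeil (g i))) ℝ)
    (hQ : ∀ i, (Q i).PosDef)
    (htr : ∀ y : (Fin n →₀ ℕ) → ℝ, y 0 = 1 →
      (momentMat n k y * Q0).trace
        + (∑ i, (locMat n (k - halfCeil (g i)) (g i) y * Q i).trace) = a) :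
    (quadForm n k Q0 + (∑ i, g i * quadForm n (k - halfCeil (g i)) (Q i))
        = (C a : MvPolynomial (Fin n) ℝ)) ∧
    (∀ c : ℝ, 0 < c →
      ∃ G0 : Matrix ↥(degLE n k) ↥(degLE n k) ℝ, G0.PosDef ∧
      ∃ G : ∀ i : Fin m,
          Matrix ↥(degLE n (k - halfCeil (g i))) ↥(degLE n (k - halfCeil (g i))) ℝ,
        (∀ i, (G i).PosDef) ∧
        (C c : MvPolynomial (Fin n) ℝ)
          = quadForm n k G0 + ∑ i, g i * quadForm n (k - halfCeil (g i)) (G i)) := by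
  have key : quadForm n k Q0 + (∑ i, g i * quadForm n (k - halfCeil (g i)) (Q i))
        = (C a : MvPolynomial (Fin n) ℝ) := by
    apply MvPolynomial.funext
    intro x
    have := htr (fun α => eval x (monomial α (1 : ℝ))) (by simp)
    simp only [trace_moment, trace_loc] at this
    rw [map_add, map_sum, eval_C, this]
  refine ⟨key, fun c hc => ?_⟩
  have hr : 0 < c / a := div_pos hc ha
  refine ⟨(c / a) • Q0, posDef_scale _ hr _ hQ0, fun i => (c / a) • Q i, fun i => posDef_scale _ hr _ (hQ i), ?_⟩
  have h2 : (C c : MvPolynomial (Fin n) ℝ) = C (c / a) * C a := by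
    rw [← C_mul, div_mul_cancel₀ _ ha.ne']
  have h3 : ∀ i, g i * quadForm n (k - halfCeil (g i)) ((c / a) • Q i)
      = C (c / a) * (g i * quadForm n (k - halfCeil (g i)) (Q i)) := fun i => by
    rw [quadForm_smul, mul_left_comm]
  rw [h2, ← key, mul_add, Finset.mul_sum, quadForm_smul, Finset.sum_congr rfl fun i _ => h3 i]
end

section
/- Let g_1,…,g_m ∈ ℝ[x] be such that g_m = R − ‖x‖₂² for some real R > 0. Then for every integer k ≥ max_i ⌈g_i⌉ and every real c > 0 there exist symmetric positive definite matrices G_0 (indexed by ℕ^n_k) and G_i (indexed by ℕ^n_{k-⌈g_i⌉}), i ∈ {1,…,m}, such that c = v_k^T G_0 v_k + Σ_{i=1}^m g_i · v_{k-⌈g_i⌉}^T G_i v_{k-⌈g_i⌉} holds as an identity in ℝ[x]. (That is, ℝ^{>0} ⊆ Q_k°(g), the interior of the truncated quadratic module, for all such k.) -/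
open MvPolynomial

lemma aux_mem_degLE {n d : ℕ} {α : Fin n →₀ ℕ} : α ∈ degLE n d ↔ α.degree ≤ d := by
  unfold degLE
  rw [Finset.mem_filter, Finset.mem_Iic, Finsupp.degree_eq_sum]
  constructor
  · exact fun h => h.2
  · intro h
    refine ⟨?_, h⟩
    intro i
    have := Finset.single_le_sum (f := fun i => α i) (fun i _ => Nat.zero_le _) (Finset.mem_univ i)
    simp only [Finsupp.equivFunOnFinite_symm_apply_apply]
    exact this.trans h

lemma aux_quadForm_add {n d : ℕ} (A B : Matrix ↥(degLE n d) ↥(degLE n d) ℝ) :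
    quadForm n d (A + B) = quadForm n d A + quadForm n d B := by
  simp [quadForm, Finset.sum_add_distrib]

lemma aux_quadForm_smul {n d : ℕ} (a : ℝ) (A : Matrix ↥(degLE n d) ↥(degLE n d) ℝ) :
    quadForm n d (a • A) = C a * quadForm n d A := by
  simp [quadForm, Finset.mul_sum, C_mul_monomial]

lemma aux_quadForm_diag {n d : ℕ} (w : (Fin n →₀ ℕ) → ℝ) :
    quadForm n d (Matrix.diagonal fun α => w α.1) = ∑ α ∈ degLE n d, monomial (α + α) (w α) := by
  rw [← Finset.sum_coe_sort]
  unfold quadForm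
  refine Finset.sum_congr rfl fun α _ => ?_
  rw [Finset.sum_eq_single α]
  · simp
  · intro b _ hb
    simp [Matrix.diagonal_apply_ne _ hb.symm]
  · simp

lemma aux_quadForm_single {n d : ℕ} (α β : ↥(degLE n d)) (a : ℝ) :
    quadForm n d (Matrix.single α β a) = monomial (α.1 + β.1) a := by
  unfold quadForm
  rw [Finset.sum_eq_single α, Finset.sum_eq_single β]
  · simp
  · intro b _ hb
    simp [Matrix.single, hb.symm]
  · simp
  · intro b _ hb
    simp [Matrix.single, hb.symm]
  · simp

lemma aux_quadForm_degree {n d : ℕ} (A : Matrix ↥(degLE n d) ↥(degLE n d) ℝ) :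
    (quadForm n d A).totalDegree ≤ 2 * d := by
  unfold quadForm
  refine totalDegree_finsetSum_le fun α _ => totalDegree_finsetSum_le fun β _ => ?_
  refine (totalDegree_monomial_le _ _).trans ?_
  have h1 := aux_mem_degLE.1 α.2
  have h2 := aux_mem_degLE.1 β.2
  have h3 : ((α : Fin n →₀ ℕ) + β).degree ≤ 2 * d := by
    rw [map_add]; omega
  exact h3

lemma aux_exists_mono {n k : ℕ} (γ : Fin n →₀ ℕ) (a : ℝ) (h : γ.degree ≤ 2 * k) :
    ∃ B : Matrix ↥(degLE n k) ↥(degLE n k) ℝ, B.IsHermitian ∧ quadForm n k B = monomial γ a := by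
  obtain ⟨α, hα, hd⟩ := Finsupp.exists_le_degree_eq γ (min k γ.degree) (min_le_right _ _)
  obtain ⟨β, rfl⟩ := exists_add_of_le hα
  have hs : (α + β).degree = α.degree + β.degree := map_add _ _ _
  have h1 : α ∈ degLE n k := aux_mem_degLE.2 (by omega)
  have h2 : β ∈ degLE n k := aux_mem_degLE.2 (by omega)
  refine ⟨Matrix.single ⟨α, h1⟩ ⟨β, h2⟩ (a / 2) + Matrix.single ⟨β, h2⟩ ⟨α, h1⟩ (a / 2), ?_, ?_⟩
  · unfold Matrix.IsHermitian
    rw [Matrix.conjTranspose_add, Matrix.conjTranspose_single, Matrix.conjTranspose_single, add_comm]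
    simp
  · rw [aux_quadForm_add, aux_quadForm_single, aux_quadForm_single, add_comm β α, ← map_add]
    simp

lemma aux_exists_sum {n k : ℕ} {ι : Type*} (s : Finset ι) (f : ι → MvPolynomial (Fin n) ℝ)
    (h : ∀ i ∈ s, ∃ B : Matrix ↥(degLE n k) ↥(degLE n k) ℝ, B.IsHermitian ∧ quadForm n k B = f i) :
    ∃ B : Matrix ↥(degLE n k) ↥(degLE n k) ℝ, B.IsHermitian ∧ quadForm n k B = ∑ i ∈ s, f i := by
  classical
  induction s using Finset.induction_on with
  | empty => exact ⟨0, Matrix.isHermitian_zero, by simp [quadForm]⟩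
  | insert i s hi ih =>
    obtain ⟨B, hB, hB'⟩ := ih fun j hj => h j (Finset.mem_insert_of_mem hj)
    obtain ⟨A, hA, hA'⟩ := h i (Finset.mem_insert_self _ _)
    exact ⟨A + B, hA.add hB, by rw [aux_quadForm_add, hA', hB', Finset.sum_insert hi]⟩

lemma aux_exists {n k : ℕ} (p : MvPolynomial (Fin n) ℝ) (h : p.totalDegree ≤ 2 * k) :
    ∃ B : Matrix ↥(degLE n k) ↥(degLE n k) ℝ, B.IsHermitian ∧ quadForm n k B = p := by
  rw [p.as_sum]
  refine aux_exists_sum _ _ fun γ hγ => aux_exists_mono γ _ ?_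
  exact (le_totalDegree hγ).trans h

lemma aux_perturb {ι : Type*} [Fintype ι] [DecidableEq ι] (D : ι → ℝ) (hD : ∀ i, 0 < D i)
    (B : Matrix ι ι ℝ) (hB : B.IsHermitian) :
    ∃ ε : ℝ, 0 < ε ∧ (Matrix.diagonal D + (-ε) • B).PosDef := by
  set M : ℝ := ∑ i, ∑ j, |B i j| with hM
  have hM0 : 0 ≤ M := Finset.sum_nonneg fun i _ => Finset.sum_nonneg fun j _ => abs_nonneg _
  obtain ⟨δ, hδ, hδD⟩ : ∃ δ : ℝ, 0 < δ ∧ ∀ i, δ ≤ D i := by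
    rcases isEmpty_or_nonempty ι with h | h
    · exact ⟨1, one_pos, fun i => isEmptyElim i⟩
    · obtain ⟨i, hi⟩ := Finite.exists_min D
      exact ⟨D i, hD i, hi⟩
  refine ⟨δ / (M + 1), by positivity, ?_⟩
  refine Matrix.PosDef.of_dotProduct_mulVec_pos ?_ ?_
  · refine (Matrix.isHermitian_diagonal _).add ?_
    unfold Matrix.IsHermitian
    rw [Matrix.conjTranspose_smul, hB.eq]; simp
  · intro x hx
    set N : ℝ := ∑ i, x i ^ 2 with hN
    have hNpos : 0 < N := by
      obtain ⟨i, hi⟩ := Function.ne_iff.1 hx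
      refine Finset.sum_pos' (fun i _ => sq_nonneg _) ⟨i, Finset.mem_univ _, ?_⟩
      have : x i ≠ 0 := hi
      positivity
    have hle : ∀ i, x i ^ 2 ≤ N := fun i =>
      Finset.single_le_sum (f := fun i => x i ^ 2) (fun i _ => sq_nonneg _) (Finset.mem_univ i)
    have e1 : star x ⬝ᵥ (Matrix.diagonal D + (-(δ / (M + 1))) • B).mulVec x
        = ∑ i, D i * x i ^ 2 - δ / (M + 1) * ∑ i, ∑ j, B i j * (x i * x j) := by
      rw [Matrix.add_mulVec, Matrix.smul_mulVec, dotProduct_add, dotProduct_smul]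
      have a1 : star x ⬝ᵥ (Matrix.diagonal D).mulVec x = ∑ i, D i * x i ^ 2 := by
        simp only [dotProduct, Matrix.mulVec_diagonal, star_trivial]
        exact Finset.sum_congr rfl fun i _ => by ring
      have a2 : star x ⬝ᵥ B.mulVec x = ∑ i, ∑ j, B i j * (x i * x j) := by
        simp only [dotProduct, Matrix.mulVec, star_trivial, Finset.mul_sum]
        exact Finset.sum_congr rfl fun i _ => Finset.sum_congr rfl fun j _ => by ring
      rw [a1, a2, smul_eq_mul]; ring
    have e2 : ∑ i, ∑ j, B i j * (x i * x j) ≤ M * N := by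
      rw [hM, Finset.sum_mul]
      refine Finset.sum_le_sum fun i _ => ?_
      rw [Finset.sum_mul]
      refine Finset.sum_le_sum fun j _ => ?_
      refine (le_abs_self _).trans ?_
      rw [abs_mul]
      refine mul_le_mul_of_nonneg_left ?_ (abs_nonneg _)
      rw [abs_le]
      constructor <;> nlinarith [hle i, hle j, sq_nonneg (x i + x j), sq_nonneg (x i - x j)]
    have e3 : δ * N ≤ ∑ i, D i * x i ^ 2 := by
      rw [hN, Finset.mul_sum]
      exact Finset.sum_le_sum fun i _ => mul_le_mul_of_nonneg_right (hδD i) (sq_nonneg _)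
    rw [e1]
    have e4 : δ / (M + 1) * ∑ i, ∑ j, B i j * (x i * x j) ≤ δ / (M + 1) * (M * N) :=
      mul_le_mul_of_nonneg_left e2 (by positivity)
    have e5 : δ / (M + 1) * (M * N) < δ * N := by
      rw [div_mul_eq_mul_div, div_lt_iff₀ (by positivity)]
      nlinarith [mul_pos hδ hNpos]
    linarith

lemma aux_halfCeil_ball {n : ℕ} (hn : 0 < n) (R : ℝ) :
    halfCeil (C R - ∑ i : Fin n, X i ^ 2 : MvPolynomial (Fin n) ℝ) = 1 := by
  have h1 : (C R - ∑ i : Fin n, X i ^ 2 : MvPolynomial (Fin n) ℝ).totalDegree ≤ 2 := by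
    refine (totalDegree_sub _ _).trans (max_le (by simp) ?_)
    refine totalDegree_finsetSum_le fun i _ => ?_
    rw [totalDegree_X_pow]
  have h2 : 2 ≤ (C R - ∑ i : Fin n, X i ^ 2 : MvPolynomial (Fin n) ℝ).totalDegree := by
    have hc : coeff (Finsupp.single ⟨0, hn⟩ 2) (C R - ∑ i : Fin n, X i ^ 2 : MvPolynomial (Fin n) ℝ)
        = -1 := by
      rw [coeff_sub, coeff_sum, coeff_C, if_neg, Finset.sum_eq_single ⟨0, hn⟩]
      · simp [coeff_X_pow]
      · intro b _ hb
        rw [coeff_X_pow, if_neg]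
        intro h
        exact hb ((Finsupp.single_left_injective two_ne_zero) h)
      · simp
      · intro h
        have := DFunLike.congr_fun h ⟨0, hn⟩
        simp at this
    have := le_totalDegree (p := (C R - ∑ i : Fin n, X i ^ 2 : MvPolynomial (Fin n) ℝ))
      (s := Finsupp.single ⟨0, hn⟩ 2) (by rw [mem_support_iff, hc]; norm_num)
    simpa using this
  unfold halfCeil
  omega

lemma aux_shift {n d : ℕ} (f : (Fin n →₀ ℕ) → MvPolynomial (Fin n) ℝ) (i : Fin n) :
    ∑ α ∈ degLE n d, f (α + Finsupp.single i 1) =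
      ∑ β ∈ degLE n (d + 1), if β i ≠ 0 then f β else 0 := by
  rw [← Finset.sum_filter]
  refine Finset.sum_nbij' (fun α => α + Finsupp.single i 1) (fun β => β - Finsupp.single i 1)
    ?_ ?_ ?_ ?_ ?_
  · intro α hα
    rw [aux_mem_degLE] at hα
    rw [Finset.mem_filter, aux_mem_degLE, map_add, Finsupp.degree_single]
    exact ⟨by omega, by simp⟩
  · intro β hβ
    rw [Finset.mem_filter, aux_mem_degLE] at hβ
    rw [aux_mem_degLE]
    have hle : Finsupp.single i 1 ≤ β := by
      rw [Finsupp.single_le_iff]; have := hβ.2; omega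
    have : (β - Finsupp.single i 1 + Finsupp.single i 1).degree = β.degree := by
      rw [tsub_add_cancel_of_le hle]
    rw [map_add, Finsupp.degree_single] at this
    omega
  · intro α _; simp
  · intro β hβ
    rw [Finset.mem_filter] at hβ
    have hle : Finsupp.single i 1 ≤ β := by
      rw [Finsupp.single_le_iff]; have := hβ.2; omega
    exact tsub_add_cancel_of_le hle
  · intro α _; rfl

lemma aux_ball {n k : ℕ} (R : ℝ) (hR : 0 < R)
    (hk : halfCeil (C R - ∑ i : Fin n, X i ^ 2 : MvPolynomial (Fin n) ℝ) ≤ k)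
    (c : ℝ) (hc : 0 < c) :
    ∃ (D w : (Fin n →₀ ℕ) → ℝ), (∀ α, α ∈ degLE n k → 0 < D α) ∧ (∀ α, 0 < w α) ∧
      C c = (∑ α ∈ degLE n k, monomial (α + α) (D α)) +
        (C R - ∑ i : Fin n, X i ^ 2 : MvPolynomial (Fin n) ℝ) *
        ∑ α ∈ degLE n (k - halfCeil (C R - ∑ i : Fin n, X i ^ 2 : MvPolynomial (Fin n) ℝ)),
          monomial (α + α) (w α) := by
  rcases Nat.eq_zero_or_pos n with rfl | hn
  · have hdeg : ∀ d, degLE 0 d = {0} := by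
      intro d
      ext α
      rw [aux_mem_degLE, Subsingleton.elim α 0]
      simp
    refine ⟨fun _ => c / 2, fun _ => c / (2 * R), fun _ _ => by positivity,
      fun _ => by positivity, ?_⟩
    rw [hdeg, hdeg]
    simp only [Finset.sum_singleton, Finset.univ_eq_empty, Finset.sum_empty, add_zero, sub_zero]
    rw [C_mul_monomial, ← map_add, C_apply]
    congr 1
    field_simp
    ring
  · rw [aux_halfCeil_ball hn] at hk ⊢
    obtain ⟨d, rfl⟩ : ∃ d, k = d + 1 := ⟨k - 1, by omega⟩
    rw [Nat.add_sub_cancel]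
    set t : ℝ := c / (2 * R) with ht
    set r : ℝ := 1 / (2 * R) with hr
    have ht0 : 0 < t := by positivity
    have hr0 : 0 < r := by positivity
    set w : (Fin n →₀ ℕ) → ℝ := fun α => t * r ^ α.degree with hw
    -- shifted weight
    set w' : (Fin n →₀ ℕ) → ℝ := fun α => t * r ^ (α.degree - 1) with hw'
    refine ⟨fun β => (if β = 0 then c else 0) + (∑ i, if β i ≠ 0 then w' β else 0)
        - (if β.degree ≤ d then R * w β else 0), w, ?_, fun α => by positivity, ?_⟩
    · intro β hβ
      rcases eq_or_ne β 0 with rfl | h0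
      · have : R * t = c / 2 := by rw [ht]; field_simp
        simp [hw, this]
        linarith
      · obtain ⟨i, hi⟩ := Finsupp.ne_iff.1 h0
        have hi' : β i ≠ 0 := hi
        have h1 : w' β ≤ ∑ i, if β i ≠ 0 then w' β else 0 := by
          have := Finset.single_le_sum (f := fun i => if β i ≠ 0 then w' β else 0)
            (fun i _ => by positivity) (Finset.mem_univ i)
          simpa only [if_pos hi'] using this
        have h2 : R * w β = w' β / 2 := by
          have hd : β.degree ≠ 0 := by
            rw [Ne, Finsupp.degree_eq_zero_iff]; exact h0
          obtain ⟨e, he⟩ := Nat.exists_eq_succ_of_ne_zero hd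
          simp only [hw, hw', he, Nat.succ_eq_add_one, Nat.add_sub_cancel, pow_succ]
          have : R * r = 1 / 2 := by rw [hr]; field_simp
          linear_combination t * r ^ e * this
        have h3 : 0 < w' β := by positivity
        simp only [if_neg h0]
        split_ifs <;> linarith
    · have s1 : ∑ α ∈ degLE n (d + 1), monomial (α + α) (if α = 0 then c else 0)
          = (C c : MvPolynomial (Fin n) ℝ) := by
        rw [Finset.sum_eq_single 0]
        · simp
        · intro b _ hb; simp [hb]
        · intro h; exact absurd (aux_mem_degLE.2 (by simp)) h
      have s2 : ∑ α ∈ degLE n (d + 1), monomial (α + α) (∑ i, if α i ≠ 0 then w' α else 0)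
          = (∑ i : Fin n, X i ^ 2 : MvPolynomial (Fin n) ℝ) *
            ∑ α ∈ degLE n d, monomial (α + α) (w α) := by
        simp only [map_sum]
        rw [Finset.sum_comm, Finset.sum_mul]
        refine Finset.sum_congr rfl fun i _ => ?_
        have := aux_shift (d := d) (fun β => monomial (β + β) (w' β)) i
        rw [Finset.mul_sum]
        trans ∑ α ∈ degLE n d, monomial ((α + Finsupp.single i 1) + (α + Finsupp.single i 1))
          (w' (α + Finsupp.single i 1))
        · rw [this]
          refine Finset.sum_congr rfl fun β _ => ?_
          split_ifs <;> simp
        · refine Finset.sum_congr rfl fun α _ => ?_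
          rw [X_pow_eq_monomial, monomial_mul]
          congr 1
          · congr 1
            rw [add_add_add_comm, ← Finsupp.single_add, add_comm]
          · simp [hw, hw', Finsupp.degree_single]
      have s3 : ∑ α ∈ degLE n (d + 1), monomial (α + α) (if α.degree ≤ d then R * w α else 0)
          = C R * ∑ α ∈ degLE n d, monomial (α + α) (w α) := by
        rw [Finset.mul_sum]
        have hf : degLE n d = (degLE n (d + 1)).filter fun α => α.degree ≤ d := by
          ext α
          rw [Finset.mem_filter, aux_mem_degLE, aux_mem_degLE]
          omega
        rw [hf, Finset.sum_filter]
        refine Finset.sum_congr rfl fun α _ => ?_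
        split_ifs
        · rw [C_mul_monomial]
        · simp
      simp only [map_add, map_sub, Finset.sum_add_distrib, Finset.sum_sub_distrib]
      rw [s1, s2, s3]
      ring

/-- If one of the constraints is a ball constraint `g_m = R − ‖x‖₂²` with
`R > 0` (here `g : Fin (m+1) → ℝ[x]` with `g (Fin.last m)` the ball constraint), then for every
`k ≥ max_i ⌈g_i⌉` and every `c > 0` there are symmetric positive definite matrices `G_0` (indexed
by `ℕ^n_k`) and `G_i` (indexed by `ℕ^n_{k-⌈g_i⌉}`) with
`c = v_k^T G_0 v_k + Σ_i g_i · v_{k-⌈g_i⌉}^T G_i v_{k-⌈g_i⌉}`; i.e. `ℝ^{>0} ⊆ Q_k°(g)`. -/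
theorem stmt3 (n m : ℕ) (g : Fin (m + 1) → MvPolynomial (Fin n) ℝ) (R : ℝ) (hR : 0 < R)
    (hball : g (Fin.last m) = C R - ∑ i, X i ^ 2) :
    ∀ k : ℕ, (∀ i, halfCeil (g i) ≤ k) → ∀ c : ℝ, 0 < c →
      ∃ G0 : Matrix ↥(degLE n k) ↥(degLE n k) ℝ, G0.PosDef ∧
      ∃ G : ∀ i : Fin (m + 1),
          Matrix ↥(degLE n (k - halfCeil (g i))) ↥(degLE n (k - halfCeil (g i))) ℝ,
        (∀ i, (G i).PosDef) ∧
        (C c : MvPolynomial (Fin n) ℝ)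
          = quadForm n k G0 + ∑ i, g i * quadForm n (k - halfCeil (g i)) (G i) := by
  intro k hk c hc
  obtain ⟨D, w, hD, hw, hEq⟩ := aux_ball (n := n) (k := k) R hR (by rw [← hball]; exact hk _) c hc
  obtain ⟨B, hB, hBp⟩ := aux_exists (k := k)
    (∑ i : Fin m, g i.castSucc * quadForm n (k - halfCeil (g i.castSucc)) 1) (by
      refine totalDegree_finsetSum_le fun i _ => ?_
      refine (totalDegree_mul _ _).trans ?_
      have h1 := aux_quadForm_degree (1 : Matrix ↥(degLE n (k - halfCeil (g i.castSucc)))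
        ↥(degLE n (k - halfCeil (g i.castSucc))) ℝ)
      have h2 := hk i.castSucc
      have h3 : (g i.castSucc).totalDegree ≤ 2 * halfCeil (g i.castSucc) := by
        unfold halfCeil; omega
      omega)
  obtain ⟨ε, hε, hpos⟩ := aux_perturb (fun α : ↥(degLE n k) => D α.1) (fun α => hD _ α.2) B hB
  refine ⟨_, hpos, fun i => if i = Fin.last m then Matrix.diagonal (fun α => w α.1)
    else ε • 1, ?_, ?_⟩
  · intro i
    dsimp only
    split_ifs
    · exact Matrix.posDef_diagonal_iff.2 fun α => hw _
    · exact Matrix.PosDef.one.smul hε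
  · rw [Fin.sum_univ_castSucc]
    simp only [if_true, Fin.castSucc_ne_last, if_false]
    rw [aux_quadForm_add, aux_quadForm_smul, hBp, aux_quadForm_diag, aux_quadForm_diag]
    simp only [aux_quadForm_smul]
    rw [hball]
    have : ∑ i : Fin m, g i.castSucc * (C ε * quadForm n (k - halfCeil (g i.castSucc)) 1)
        = C ε * ∑ i : Fin m, g i.castSucc * quadForm n (k - halfCeil (g i.castSucc)) 1 := by
      rw [Finset.mul_sum]
      exact Finset.sum_congr rfl fun i _ => by ring
    rw [this, map_neg]
    linear_combination hEq
end

section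
/- Let n, m, r be integers with 0 ≤ 2r ≤ m. Suppose given subsets T_i ⊆ {1,…,n} and reals R̄_i > R̲_i > 0 for i ∈ {1,…,r}, and subsets T_j ⊆ {1,…,n} and reals R̄_j > 0 for j ∈ {2r+1,…,m}, such that (∪_{i=1}^{r} T_i) ∪ (∪_{j=2r+1}^{m} T_j) = {1,…,n}. Define g_i := ‖x(T_i)‖₂² − R̲_i and g_{i+r} := R̄_i − ‖x(T_i)‖₂² for i ∈ {1,…,r}, and g_j := R̄_j − ‖x(T_j)‖₂² for j ∈ {2r+1,…,m}. Then for every integer k ≥ 1 there exist a real ξ > 0 and diagonal matrices G_0 (indexed by ℕ^n_k) and G_1,…,G_m (indexed by ℕ^n_{k-1}), all of whose diagonal entries are ≥ 1, such that ξ = v_k^T G_0 v_k + Σ_{i=1}^m g_i · v_{k-1}^T G_i v_{k-1} holds in ℝ[x]. -/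
open MvPolynomial

/-- A (diagonal) matrix all of whose off-diagonal entries vanish and whose diagonal entries
are all ≥ 1. -/
def DiagGE1 {ι : Type*} (M : Matrix ι ι ℝ) : Prop :=
  (∀ a b, a ≠ b → M a b = 0) ∧ ∀ a, 1 ≤ M a a

lemma aux_mem (n d : ℕ) (α : Fin n →₀ ℕ) : α ∈ degLE n d ↔ (∑ i, α i) ≤ d := by
  unfold degLE
  simp only [Finset.mem_filter, Finset.mem_Iic, and_iff_right_iff_imp]
  intro h i
  simp only [Finsupp.equivFunOnFinite_symm_apply_apply]
  exact (Finset.single_le_sum (f := fun i => α i) (fun _ _ => Nat.zero_le _) (Finset.mem_univ i)).trans h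

/-- diagonal polynomial -/
noncomputable def auxP (n d : ℕ) (c : (Fin n →₀ ℕ) → ℝ) : MvPolynomial (Fin n) ℝ :=
  ∑ α ∈ degLE n d, monomial α (c α)

lemma aux_quad (n d : ℕ) (c : (Fin n →₀ ℕ) → ℝ) :
    quadForm n d (Matrix.diagonal fun α => c α.1) = expand 2 (auxP n d c) := by
  unfold quadForm auxP
  rw [map_sum, ← Finset.sum_coe_sort (degLE n d)]
  refine Finset.sum_congr rfl fun α _ => ?_
  rw [Finset.sum_eq_single α]
  · rw [Matrix.diagonal_apply_eq, expand_monomial, two_smul]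
  · intro b _ hb
    rw [Matrix.diagonal_apply_ne _ hb.symm, map_zero]
  · simp

lemma aux_diag (n d : ℕ) (c : (Fin n →₀ ℕ) → ℝ) (h : ∀ α ∈ degLE n d, 1 ≤ c α) :
    DiagGE1 (Matrix.diagonal fun α : ↥(degLE n d) => c α.1) :=
  ⟨fun _ _ hab => Matrix.diagonal_apply_ne _ hab, fun a => by
    rw [Matrix.diagonal_apply_eq]; exact h _ a.2⟩

lemma aux_coeff (n d : ℕ) (c : (Fin n →₀ ℕ) → ℝ) (α : Fin n →₀ ℕ) :
    coeff α (auxP n d c) = if (∑ i, α i) ≤ d then c α else 0 := by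
  unfold auxP
  simp only [coeff_sum, coeff_monomial, Finset.sum_ite_eq', aux_mem]

lemma aux_deg {n : ℕ} (α : Fin n →₀ ℕ) (v : Fin n) (hv : v ∈ α.support) :
    (∑ i, (α - Finsupp.single v 1 : Fin n →₀ ℕ) i) + 1 = ∑ i, α i := by
  have h : α = (α - Finsupp.single v 1) + Finsupp.single v 1 := by
    rw [tsub_add_cancel_of_le]
    rw [Finsupp.single_le_iff]
    have := Finsupp.mem_support_iff.1 hv
    omega
  conv_rhs => rw [h]
  simp [Finset.sum_add_distrib]

lemma aux_coeffX (n d : ℕ) (f : ℕ → ℝ) (α : Fin n →₀ ℕ) (v : Fin n) :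
    coeff α (X v * auxP n d fun β => f (∑ i, β i)) =
      if v ∈ α.support then (if (∑ i, α i) ≤ d + 1 then f ((∑ i, α i) - 1) else 0) else 0 := by
  rw [coeff_X_mul']
  split_ifs with h1 h2 h2
  · have := aux_deg α v h1
    rw [aux_coeff, if_pos (by omega)]
    congr 1
    omega
  · have := aux_deg α v h1
    rw [aux_coeff, if_neg (by omega)]
  · rfl

lemma aux_coeffS (n d : ℕ) (f : ℕ → ℝ) (α : Fin n →₀ ℕ) (T : Finset (Fin n)) :
    coeff α ((∑ v ∈ T, X v) * auxP n d fun β => f (∑ i, β i)) =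
      ((T ∩ α.support).card : ℝ) * (if (∑ i, α i) ≤ d + 1 then f ((∑ i, α i) - 1) else 0) := by
  rw [Finset.sum_mul, coeff_sum]
  simp only [aux_coeffX]
  rw [Finset.sum_ite_mem, Finset.sum_const, nsmul_eq_mul]

set_option maxHeartbeats 2000000

/-- POPs with ball or annulus constraints on subsets of variables: with
`r` annulus constraints `g_i = ‖x(T_i)‖₂² − R̲_i`, `g_{i+r} = R̄_i − ‖x(T_i)‖₂²` (`i ∈ [r]`)
and `m − 2r` ball constraints `g_j = R̄_j − ‖x(T_j)‖₂²`, whose index sets cover `{1,…,n}`,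
for every `k ≥ 1` there exist `ξ > 0` and diagonal matrices `G_0` (indexed by `ℕ^n_k`) and
`G_1,…,G_m` (indexed by `ℕ^n_{k-1}`), all with diagonal entries ≥ 1, such that
`ξ = v_k^T G_0 v_k + Σ_{i=1}^m g_i · v_{k-1}^T G_i v_{k-1}`. -/
theorem stmt6 (n m r : ℕ) (hrm : 2 * r ≤ m)
    (T : Fin r → Finset (Fin n)) (Rlo Rhi : Fin r → ℝ)
    (hR : ∀ i, 0 < Rlo i ∧ Rlo i < Rhi i)
    (T' : Fin (m - 2 * r) → Finset (Fin n)) (Rb : Fin (m - 2 * r) → ℝ)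
    (hRb : ∀ j, 0 < Rb j)
    (hcov : (Finset.univ.biUnion T) ∪ (Finset.univ.biUnion T') = (Finset.univ : Finset (Fin n))) :
    ∀ k : ℕ, 1 ≤ k →
      ∃ ξ : ℝ, 0 < ξ ∧
      ∃ G0 : Matrix ↥(degLE n k) ↥(degLE n k) ℝ, DiagGE1 G0 ∧
      ∃ Glo : Fin r → Matrix ↥(degLE n (k - 1)) ↥(degLE n (k - 1)) ℝ,
        (∀ i, DiagGE1 (Glo i)) ∧
      ∃ Ghi : Fin r → Matrix ↥(degLE n (k - 1)) ↥(degLE n (k - 1)) ℝ,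
        (∀ i, DiagGE1 (Ghi i)) ∧
      ∃ Gb : Fin (m - 2 * r) → Matrix ↥(degLE n (k - 1)) ↥(degLE n (k - 1)) ℝ,
        (∀ j, DiagGE1 (Gb j)) ∧
        (C ξ : MvPolynomial (Fin n) ℝ)
          = quadForm n k G0
            + (∑ i, ((∑ v ∈ T i, X v ^ 2) - C (Rlo i)) * quadForm n (k - 1) (Glo i))
            + (∑ i, (C (Rhi i) - ∑ v ∈ T i, X v ^ 2) * quadForm n (k - 1) (Ghi i))
            + ∑ j, (C (Rb j) - ∑ v ∈ T' j, X v ^ 2) * quadForm n (k - 1) (Gb j) := by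
  intro k hk
  generalize hd1 : k - 1 = d
  obtain rfl : k = d + 1 := by omega
  set S : ℝ := (∑ i, Rhi i) + ∑ j, Rb j with hS
  have hRhi : ∀ i, 0 < Rhi i := fun i => (hR i).1.trans (hR i).2
  have hS0 : 0 ≤ S := add_nonneg (Finset.sum_nonneg fun i _ => (hRhi i).le)
    (Finset.sum_nonneg fun j _ => (hRb j).le)
  set M : ℝ := 1 + r * n + S with hM
  have hrn : (0:ℝ) ≤ r * n := by positivity
  have hM1 : 1 ≤ M := by linarith
  let f : ℕ → ℝ := fun e => M ^ (d + 1 - e)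
  have hf1 : ∀ e, 1 ≤ f e := fun e => one_le_pow₀ hM1
  have hff0 : ∀ e, 1 ≤ e → e ≤ d + 1 → f (e - 1) = M * f e := by
    intro e h1 h2
    simp only [f]
    rw [← pow_succ']
    congr 1
    omega
  clear_value f
  let one : ℕ → ℝ := fun _ => 1
  let p : MvPolynomial (Fin n) ℝ := auxP n d fun β => f (∑ i, β i)
  let q : MvPolynomial (Fin n) ℝ := auxP n d fun β => one (∑ i, β i)
  let Q : MvPolynomial (Fin n) ℝ :=
    (∑ i, ((∑ v ∈ T i, X v) - C (Rlo i)) * q) + (∑ i, (C (Rhi i) - ∑ v ∈ T i, X v) * p)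
      + ∑ j, (C (Rb j) - ∑ v ∈ T' j, X v) * p
  have hQc : ∀ α, coeff α Q =
      (∑ i, (((T i ∩ α.support).card : ℝ) * (if (∑ i, α i) ≤ d + 1 then 1 else 0)
        - Rlo i * (if (∑ i, α i) ≤ d then 1 else 0)))
      + (∑ i, (Rhi i * (if (∑ i, α i) ≤ d then f (∑ i, α i) else 0) -
        ((T i ∩ α.support).card : ℝ) * (if (∑ i, α i) ≤ d + 1 then f ((∑ i, α i) - 1) else 0)))
      + ∑ j, (Rb j * (if (∑ i, α i) ≤ d then f (∑ i, α i) else 0) -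
        ((T' j ∩ α.support).card : ℝ) * (if (∑ i, α i) ≤ d + 1 then f ((∑ i, α i) - 1) else 0)) := by
    intro α
    simp only [Q, p, q, coeff_add, coeff_sum, sub_mul, coeff_sub, coeff_C_mul, aux_coeff, aux_coeffS]
    rfl
  have hbig : ∀ α : Fin n →₀ ℕ, d + 1 < (∑ i, α i) → coeff α Q = 0 := by
    intro α h
    rw [hQc]
    simp [show ¬ (∑ i, α i) ≤ d + 1 by omega, show ¬ (∑ i, α i) ≤ d by omega]
  have hsmall : ∀ α : Fin n →₀ ℕ, α ≠ 0 → (∑ i, α i) ≤ d + 1 → coeff α Q ≤ -1 := by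
    clear_value Q M S
    intro α h0 hd
    obtain ⟨v, hv⟩ := Finsupp.support_nonempty_iff.2 h0
    have hpos := aux_deg α v hv
    set e := ∑ i, α i with he
    have hcard : 1 ≤ (∑ i, ((T i ∩ α.support).card : ℝ)) + ∑ j, ((T' j ∩ α.support).card : ℝ) := by
      have hvm : v ∈ (Finset.univ.biUnion T) ∪ (Finset.univ.biUnion T') := by
        rw [hcov]; exact Finset.mem_univ v
      have hN1 : (0:ℝ) ≤ ∑ i, ((T i ∩ α.support).card : ℝ) := Finset.sum_nonneg fun _ _ => Nat.cast_nonneg _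
      have hN2 : (0:ℝ) ≤ ∑ j, ((T' j ∩ α.support).card : ℝ) := Finset.sum_nonneg fun _ _ => Nat.cast_nonneg _
      rcases Finset.mem_union.1 hvm with h | h
      · obtain ⟨i, _, hi⟩ := Finset.mem_biUnion.1 h
        have h1 : (1:ℝ) ≤ ((T i ∩ α.support).card : ℝ) := by
          exact_mod_cast Finset.card_pos.2 ⟨v, Finset.mem_inter.2 ⟨hi, hv⟩⟩
        have h2 := Finset.single_le_sum (f := fun i => ((T i ∩ α.support).card : ℝ))
          (fun _ _ => Nat.cast_nonneg _) (Finset.mem_univ i)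
        linarith
      · obtain ⟨i, _, hi⟩ := Finset.mem_biUnion.1 h
        have h1 : (1:ℝ) ≤ ((T' i ∩ α.support).card : ℝ) := by
          exact_mod_cast Finset.card_pos.2 ⟨v, Finset.mem_inter.2 ⟨hi, hv⟩⟩
        have h2 := Finset.single_le_sum (f := fun i => ((T' i ∩ α.support).card : ℝ))
          (fun _ _ => Nat.cast_nonneg _) (Finset.mem_univ i)
        linarith
    have hff : f (e - 1) = M * f e := hff0 e (by omega) hd
    have hlo : (∑ i, (((T i ∩ α.support).card : ℝ) * (if e ≤ d + 1 then 1 else 0)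
        - Rlo i * (if e ≤ d then 1 else 0))) ≤ r * n := by
      have : ∀ i ∈ (Finset.univ : Finset (Fin r)),
          (((T i ∩ α.support).card : ℝ) * (if e ≤ d + 1 then 1 else 0)
        - Rlo i * (if e ≤ d then 1 else 0)) ≤ n := by
        intro i _
        have h1 : ((T i ∩ α.support).card : ℝ) ≤ n := by
          have h3 : (T i ∩ α.support).card ≤ n :=
            (Finset.card_le_univ (T i ∩ α.support)).trans (Fintype.card_fin n).le
          exact Nat.cast_le.2 h3
        have h2 : 0 ≤ Rlo i * (if e ≤ d then 1 else 0) :=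
          mul_nonneg (hR i).1.le (by split_ifs <;> norm_num)
        rw [if_pos hd]
        linarith
      simpa using Finset.sum_le_card_nsmul _ _ _ this
    have hg : (if e ≤ d then f e else 0) ≤ f e := by
      split_ifs
      · exact le_rfl
      · linarith [hf1 e]
    rw [hQc, ← he]
    set g : ℝ := if e ≤ d then f e else 0
    simp only [if_pos hd, mul_one] at hlo ⊢
    rw [hff, Finset.sum_sub_distrib (f := fun i => Rhi i * g), Finset.sum_sub_distrib (f := fun i => Rb i * g),
      ← Finset.sum_mul, ← Finset.sum_mul, ← Finset.sum_mul, ← Finset.sum_mul]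
    have e1 : S * g ≤ S * f e := mul_le_mul_of_nonneg_left hg hS0
    have hMf : 0 ≤ M * f e := mul_nonneg (by linarith) (by linarith [hf1 e])
    have e2 := mul_le_mul_of_nonneg_right hcard hMf
    have e3 : (1 + r * n) * 1 ≤ (1 + (r:ℝ) * n) * f e :=
      mul_le_mul_of_nonneg_left (hf1 e) (by linarith)
    have e4 : M * f e = (1 + (r:ℝ) * n) * f e + S * f e := by rw [hM]; ring
    have e5 : S * g = (∑ i, Rhi i) * g + (∑ j, Rb j) * g := by rw [hS]; ring
    linarith
  let ξ : ℝ := |coeff 0 Q| + 1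
  let a : (Fin n →₀ ℕ) → ℝ := fun α => coeff α (C ξ - Q)
  have ha : ∀ α ∈ degLE n (d + 1), 1 ≤ a α := by
    intro α hα
    rw [aux_mem] at hα
    simp only [a, coeff_sub, coeff_C]
    by_cases h0 : α = 0
    · subst h0
      simp only [if_true, ξ]
      linarith [le_abs_self (coeff 0 Q)]
    · rw [if_neg (Ne.symm h0)]
      linarith [hsmall α h0 hα]
  have hpoly : C ξ = auxP n (d + 1) a + Q := by
    rw [← sub_eq_iff_eq_add]
    ext α
    rw [aux_coeff]
    split_ifs with h
    · rfl
    · rw [coeff_sub, coeff_C, hbig α (by omega), if_neg, sub_zero]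
      rintro rfl
      simp at h
  refine ⟨ξ, by positivity, Matrix.diagonal fun α => a α.1, aux_diag _ _ a ha,
    fun _ => Matrix.diagonal fun α => one (∑ i, α.1 i),
    fun _ => aux_diag _ _ (fun β => one (∑ i, β i)) fun _ _ => le_rfl,
    fun _ => Matrix.diagonal fun α => f (∑ i, α.1 i),
    fun _ => aux_diag _ _ (fun β => f (∑ i, β i)) fun _ _ => hf1 _,
    fun _ => Matrix.diagonal fun α => f (∑ i, α.1 i),
    fun _ => aux_diag _ _ (fun β => f (∑ i, β i)) fun _ _ => hf1 _, ?_⟩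
  have h := congrArg (expand 2) hpoly
  rw [expand_C] at h
  beta_reduce
  rw [h, aux_quad n (d + 1) a, aux_quad n d (fun β => one (∑ i, β i)),
    aux_quad n d (fun β => f (∑ i, β i))]
  simp only [Q, map_add, map_sum, map_mul, map_sub, expand_C, expand_X, p, q]
  ring
end

section
/- Let I_1,…,I_p ⊆ {1,…,n} and let J_1,…,J_p be disjoint finite index sets with polynomials g_i ∈ ℝ[x(I_j)] for i ∈ J_j. Assume that for every j ∈ {1,…,p} there is some i ∈ J_j with g_i = R_j − ‖x(I_j)‖₂² for some R_j > 0. Then for every j ∈ {1,…,p}, every integer k ≥ max_{i∈J_j} ⌈g_i⌉, and every real c > 0, there exist symmetric positive definite matrices G_0 (indexed by ℕ^{I_j}_k) and G_i (indexed by ℕ^{I_j}_{k-⌈g_i⌉}), i ∈ J_j, such that c = (v_k^{I_j})^T G_0 v_k^{I_j} + Σ_{i∈J_j} g_i · (v_{k-⌈g_i⌉}^{I_j})^T G_i v_{k-⌈g_i⌉}^{I_j} holds in ℝ[x]. (That is, ℝ^{>0} ⊆ Q_k°(g_{J_j}) for all k and all j.) -/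
open MvPolynomial

/-- The finite set `ℕ^I_d` of multi-indices `α` with `|α| ≤ d` supported on `I`. -/
noncomputable def degLEI (n : ℕ) (I : Finset (Fin n)) (d : ℕ) : Finset (Fin n →₀ ℕ) :=
  (degLE n d).filter fun α => α.support ⊆ I

/-- The polynomial `(v_d^I)^T G v_d^I = Σ_{α,β ∈ ℕ^I_d} G_{α,β} x^{α+β}`. -/
noncomputable def quadFormI (n : ℕ) (I : Finset (Fin n)) (d : ℕ)
    (G : Matrix ↥(degLEI n I d) ↥(degLEI n I d) ℝ) : MvPolynomial (Fin n) ℝ :=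
  ∑ α : ↥(degLEI n I d), ∑ β : ↥(degLEI n I d), monomial (α.1 + β.1) (G α β)

theorem mem_degLEI_iff {n : ℕ} {I : Finset (Fin n)} {d : ℕ} {α : Fin n →₀ ℕ} :
    α ∈ degLEI n I d ↔ (∑ i, α i) ≤ d ∧ α.support ⊆ I := by
  simp only [degLEI, degLE, Finset.mem_filter, Finset.mem_Iic]
  constructor
  · rintro ⟨⟨_, h⟩, h2⟩; exact ⟨h, h2⟩
  · rintro ⟨h, h2⟩
    refine ⟨⟨fun i => ?_, h⟩, h2⟩
    simp only [Finsupp.equivFunOnFinite_symm_apply_apply]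
    exact (Finset.single_le_sum (f := fun i => α i) (fun _ _ => Nat.zero_le _)
      (Finset.mem_univ i)).trans h

/-- Sums of squares of level `d`. -/
def IsS (n : ℕ) (I : Finset (Fin n)) (d : ℕ) (f : MvPolynomial (Fin n) ℝ) : Prop :=
  ∃ G : Matrix ↥(degLEI n I d) ↥(degLEI n I d) ℝ, G.PosSemidef ∧ quadFormI n I d G = f

theorem quadFormI_add {n : ℕ} {I : Finset (Fin n)} {d : ℕ}
    (G H : Matrix ↥(degLEI n I d) ↥(degLEI n I d) ℝ) :
    quadFormI n I d (G + H) = quadFormI n I d G + quadFormI n I d H := by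
  simp [quadFormI, Finset.sum_add_distrib]

theorem quadFormI_smul {n : ℕ} {I : Finset (Fin n)} {d : ℕ} (c : ℝ)
    (G : Matrix ↥(degLEI n I d) ↥(degLEI n I d) ℝ) :
    quadFormI n I d (c • G) = C c * quadFormI n I d G := by
  simp [quadFormI, Finset.mul_sum, C_mul_monomial]

theorem IsS.add {n : ℕ} {I : Finset (Fin n)} {d : ℕ} {f h : MvPolynomial (Fin n) ℝ}
    (hf : IsS n I d f) (hh : IsS n I d h) : IsS n I d (f + h) := by
  obtain ⟨G, hG, rfl⟩ := hf
  obtain ⟨H, hH, rfl⟩ := hh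
  exact ⟨G + H, hG.add hH, quadFormI_add G H⟩

theorem IsS.smul {n : ℕ} {I : Finset (Fin n)} {d : ℕ} {f : MvPolynomial (Fin n) ℝ}
    (hf : IsS n I d f) {c : ℝ} (hc : 0 ≤ c) : IsS n I d (C c * f) := by
  obtain ⟨G, hG, rfl⟩ := hf
  exact ⟨c • G, hG.smul hc, quadFormI_smul c G⟩

theorem IsS.zero {n : ℕ} {I : Finset (Fin n)} {d : ℕ} : IsS n I d 0 :=
  ⟨0, Matrix.PosSemidef.zero, by simp [quadFormI]⟩

theorem IsS.sum {n : ℕ} {I : Finset (Fin n)} {d : ℕ} {κ : Type} (s : Finset κ)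
    (f : κ → MvPolynomial (Fin n) ℝ) (h : ∀ i ∈ s, IsS n I d (f i)) :
    IsS n I d (∑ i ∈ s, f i) :=
  Finset.sum_induction f (IsS n I d) (fun _ _ => IsS.add) IsS.zero h

theorem IsS.sq {n : ℕ} {I : Finset (Fin n)} {d : ℕ} (a : ↥(degLEI n I d) → ℝ) :
    IsS n I d ((∑ γ : ↥(degLEI n I d), monomial γ.1 (a γ)) ^ 2) := by
  refine ⟨Matrix.vecMulVec a a, ?_, ?_⟩
  · simpa using Matrix.posSemidef_vecMulVec_self_star a
  · simp [quadFormI, pow_two, Finset.sum_mul_sum, monomial_mul, Matrix.vecMulVec_apply]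

theorem IsS.binom {n : ℕ} {I : Finset (Fin n)} {d : ℕ} {α β : Fin n →₀ ℕ}
    (hα : α ∈ degLEI n I d) (hβ : β ∈ degLEI n I d) (t : ℝ) :
    IsS n I d ((monomial α 1 + monomial β t) ^ 2) := by
  have := IsS.sq (fun γ : ↥(degLEI n I d) =>
    (if γ = ⟨α, hα⟩ then (1:ℝ) else 0) + (if γ = ⟨β, hβ⟩ then t else 0))
  convert this using 2
  simp only [map_add, Finset.sum_add_distrib]
  congr 1
  · rw [Finset.sum_eq_single ⟨α, hα⟩] <;> simp +contextual
  · rw [Finset.sum_eq_single ⟨β, hβ⟩] <;> simp +contextual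

theorem IsS.mono {n : ℕ} {I : Finset (Fin n)} {d : ℕ} {α : Fin n →₀ ℕ}
    (hα : α ∈ degLEI n I d) : IsS n I d (monomial (α + α) 1) := by
  have := IsS.binom hα hα 0
  simpa [pow_two, monomial_mul] using this

/-- Sum of squares of all monomials. -/
noncomputable def NN (n : ℕ) (I : Finset (Fin n)) (d : ℕ) : MvPolynomial (Fin n) ℝ :=
  ∑ γ ∈ degLEI n I d, monomial (γ + γ) 1

theorem quadFormI_one (n : ℕ) (I : Finset (Fin n)) (d : ℕ) :
    quadFormI n I d 1 = NN n I d := by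
  unfold quadFormI NN
  rw [← Finset.sum_coe_sort (degLEI n I d)]
  refine Finset.sum_congr rfl fun α _ => ?_
  rw [Finset.sum_eq_single α]
  · simp
  · intro b _ hb; simp [Matrix.one_apply_ne' hb]
  · simp

theorem IsS.NN_sub {n : ℕ} {I : Finset (Fin n)} {d : ℕ} {α : Fin n →₀ ℕ}
    (hα : α ∈ degLEI n I d) : IsS n I d (NN n I d - monomial (α + α) 1) := by
  unfold NN
  rw [← Finset.sum_erase_add _ _ hα, add_sub_cancel_right]
  exact IsS.sum _ _ fun i hi => IsS.mono (Finset.mem_of_mem_erase hi)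

theorem exists_sub_deg {n : ℕ} (γ : Fin n →₀ ℕ) (m : ℕ) (hm : m ≤ ∑ i, γ i) :
    ∃ α β : Fin n →₀ ℕ, α + β = γ ∧ ∑ i, α i = m := by
  induction m with
  | zero => exact ⟨0, γ, by simp, by simp⟩
  | succ m ih =>
    obtain ⟨α, β, h, hs⟩ := ih (by omega)
    have : ∃ v, β v ≠ 0 := by
      by_contra! hb
      have : β = 0 := by ext v; simp [hb]
      subst this
      rw [add_zero] at h; subst h; omega
    obtain ⟨v, hv⟩ := this
    refine ⟨α + Finsupp.single v 1, β - Finsupp.single v 1, ?_, ?_⟩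
    · rw [← h, add_assoc]; congr 1
      ext u
      by_cases hu : u = v
      · subst hu; simp; omega
      · simp [Finsupp.single_apply, Ne.symm hu]
    · simp [Finset.sum_add_distrib, hs, Finsupp.single_apply]

theorem mono_bound {n : ℕ} {I : Finset (Fin n)} {k : ℕ} (γ : Fin n →₀ ℕ) (t : ℝ)
    (h1 : ∑ i, γ i ≤ 2 * k) (h2 : γ.support ⊆ I) :
    ∃ M : ℝ, 0 ≤ M ∧ IsS n I k (C M * NN n I k - monomial γ t) := by
  obtain ⟨α, β, hab, hs⟩ := exists_sub_deg γ (min k (∑ i, γ i)) (min_le_right _ _)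
  have hsum : ∑ i, γ i = ∑ i, α i + ∑ i, β i := by
    rw [← hab]; simp [Finset.sum_add_distrib]
  have hα : α ∈ degLEI n I k := by
    refine mem_degLEI_iff.2 ⟨by omega, (Finsupp.support_mono ?_).trans h2⟩
    rw [← hab]; exact le_self_add
  have hβ : β ∈ degLEI n I k := by
    refine mem_degLEI_iff.2 ⟨by omega, (Finsupp.support_mono ?_).trans h2⟩
    rw [← hab]; exact le_add_self
  refine ⟨(1 + t ^ 2) / 2, by positivity, ?_⟩
  have A := ((IsS.binom hα hβ (-t)).smul (c := 1/2) (by norm_num)).add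
    (((IsS.NN_sub hα).smul (c := 1/2) (by norm_num)).add
      ((IsS.NN_sub hβ).smul (c := t^2/2) (by positivity)))
  convert A using 1
  have e1 : (monomial γ t : MvPolynomial (Fin n) ℝ) = C t * (monomial α 1 * monomial β 1) := by
    rw [monomial_mul, C_mul_monomial, hab]; simp
  have e2 : (monomial β (-t) : MvPolynomial (Fin n) ℝ) = - C t * monomial β 1 := by
    rw [neg_mul, C_mul_monomial]; simp
  have e3 : (monomial (α + α) 1 : MvPolynomial (Fin n) ℝ) = monomial α 1 * monomial α 1 := by
    rw [monomial_mul]; simp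
  have e4 : (monomial (β + β) 1 : MvPolynomial (Fin n) ℝ) = monomial β 1 * monomial β 1 := by
    rw [monomial_mul]; simp
  have e5 : (C ((1 + t ^ 2) / 2) : MvPolynomial (Fin n) ℝ) = C (1/2) + C (1/2) * C t ^ 2 := by
    rw [← C_pow, ← C_mul, ← C_add]; congr 1; ring
  have e6 : (C (t ^ 2 / 2) : MvPolynomial (Fin n) ℝ) = C (1/2) * C t ^ 2 := by
    rw [← C_pow, ← C_mul]; congr 1; ring
  have e7 : (C (1/2) : MvPolynomial (Fin n) ℝ) * 2 = 1 := by
    rw [show (2 : MvPolynomial (Fin n) ℝ) = C 2 from (map_ofNat C 2).symm, ← C_mul]; norm_num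
  rw [e1, e2, e3, e4, e5, e6]
  linear_combination (C t * monomial α 1 * monomial β 1) * e7

theorem poly_bound {n : ℕ} {I : Finset (Fin n)} {k : ℕ} (f : MvPolynomial (Fin n) ℝ)
    (h1 : f.totalDegree ≤ 2 * k) (h2 : f.vars ⊆ I) :
    ∃ M : ℝ, 0 ≤ M ∧ IsS n I k (C M * NN n I k - f) := by
  have key : ∀ γ : Fin n →₀ ℕ, ∃ M : ℝ, 0 ≤ M ∧
      (γ ∈ f.support → IsS n I k (C M * NN n I k - monomial γ (coeff γ f))) := by
    intro γ
    by_cases hγ : γ ∈ f.support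
    · obtain ⟨M, h, h'⟩ := mono_bound (I := I) (k := k) γ (coeff γ f) (by
        have := (le_totalDegree hγ).trans h1
        rwa [Finsupp.sum_fintype _ _ (by simp)] at this) (fun v hv => h2 (by
          rw [mem_vars_iff_mem_support]; exact ⟨γ, hγ, hv⟩))
      exact ⟨M, h, fun _ => h'⟩
    · exact ⟨0, le_rfl, fun h => absurd h hγ⟩
  choose M hM hM' using key
  refine ⟨∑ γ ∈ f.support, M γ, Finset.sum_nonneg fun γ _ => hM γ, ?_⟩
  have := IsS.sum f.support _ (fun γ hγ => hM' γ hγ)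
  rw [Finset.sum_sub_distrib, ← Finset.sum_mul, ← map_sum, ← as_sum] at this
  exact this

theorem step_one {n : ℕ} {I : Finset (Fin n)} {k e : ℕ} (hke : k ≤ e + 1) {R : ℝ} (hR : 0 < R)
    (m : ℕ) : ∀ α ∈ degLEI n I k, ∑ i, α i = m →
    ∃ c : ℝ, 0 ≤ c ∧ ∃ τ σ, IsS n I k τ ∧ IsS n I e σ ∧
      C c = monomial (α + α) 1 + τ + (C R - ∑ v ∈ I, X v ^ 2) * σ := by
  induction m with
  | zero =>
    intro α _ h
    have : α = 0 := by
      ext i; simpa using (Finset.sum_eq_zero_iff.1 h) i (Finset.mem_univ i)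
    subst this
    exact ⟨1, by norm_num, 0, 0, IsS.zero, IsS.zero, by simp⟩
  | succ m ih =>
    intro α hα h
    have hα' := mem_degLEI_iff.1 hα
    obtain ⟨β, δ, hab, hs⟩ := exists_sub_deg α m (by omega)
    have hsum : ∑ i, α i = ∑ i, β i + ∑ i, δ i := by
      rw [← hab]; simp [Finset.sum_add_distrib]
    have hd : ∃ v, δ v ≠ 0 := by
      by_contra! hb
      have : δ = 0 := by ext v; simp [hb]
      subst this
      simp at hsum; omega
    obtain ⟨v, hv⟩ := hd
    have hδ : δ = Finsupp.single v 1 := by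
      have h1 : ∑ i, δ i = 1 := by omega
      rw [← Finset.add_sum_erase _ _ (Finset.mem_univ v)] at h1
      have h2 : ∑ i ∈ Finset.univ.erase v, δ i = 0 := by omega
      ext u
      by_cases hu : u = v
      · subst hu; simp; omega
      · have := (Finset.sum_eq_zero_iff.1 h2) u (by simp [hu])
        simp [Finsupp.single_apply, Ne.symm hu, this]
    have hvI : v ∈ I := hα'.2 (by rw [← hab, hδ]; simp)
    have hβs : β.support ⊆ I :=
      (Finsupp.support_mono (by rw [← hab]; exact le_self_add)).trans hα'.2
    obtain ⟨c, hc, τ, σ, hτ, hσ, hE⟩ := ih β (mem_degLEI_iff.2 ⟨by omega, hβs⟩) hs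
    have hmul : ∀ u, (monomial (β + β) 1 * X u ^ 2 : MvPolynomial (Fin n) ℝ) =
        monomial ((β + Finsupp.single u 1) + (β + Finsupp.single u 1)) 1 := by
      intro u
      rw [X, monomial_pow, monomial_mul]
      congr 1
      · rw [two_smul, add_add_add_comm]
      · simp
    refine ⟨R * c, by positivity, C R * τ + ∑ u ∈ I.erase v, monomial (β + β) 1 * X u ^ 2,
      C R * σ + monomial (β + β) 1, (hτ.smul hR.le).add (IsS.sum _ _ fun u hu => ?_),
      (hσ.smul hR.le).add (IsS.mono (mem_degLEI_iff.2 ⟨by omega, hβs⟩)), ?_⟩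
    · rw [hmul]
      apply IsS.mono
      refine mem_degLEI_iff.2 ⟨?_, ?_⟩
      · simp [Finset.sum_add_distrib, Finsupp.single_apply]; omega
      · refine Finsupp.support_add.trans (Finset.union_subset hβs ?_)
        refine Finsupp.support_single_subset.trans ?_
        simpa using Finset.mem_of_mem_erase hu
    · rw [C_mul, hE, ← hab, hδ, ← hmul, ← Finset.mul_sum, ← Finset.add_sum_erase I _ hvI]
      ring

theorem step_all {n : ℕ} {I : Finset (Fin n)} {k e : ℕ} (hke : k ≤ e + 1) {R : ℝ} (hR : 0 < R) :
    ∃ c : ℝ, 0 < c ∧ ∃ τ σ, IsS n I k τ ∧ IsS n I e σ ∧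
      C c = NN n I k + τ + (C R - ∑ v ∈ I, X v ^ 2) * σ := by
  have key : ∀ α : Fin n →₀ ℕ, ∃ c : ℝ, ∃ τ σ, α ∈ degLEI n I k → (0 ≤ c ∧ IsS n I k τ ∧
      IsS n I e σ ∧ C c = monomial (α + α) 1 + τ + (C R - ∑ v ∈ I, X v ^ 2) * σ) := by
    intro α
    by_cases hα : α ∈ degLEI n I k
    · obtain ⟨c, hc, τ, σ, h1, h2, h3⟩ := step_one hke hR _ α hα rfl
      exact ⟨c, τ, σ, fun _ => ⟨hc, h1, h2, h3⟩⟩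
    · exact ⟨0, 0, 0, fun h => absurd h hα⟩
  choose c τ σ H using key
  have h0 : (0 : Fin n →₀ ℕ) ∈ degLEI n I k := mem_degLEI_iff.2 (by simp)
  refine ⟨∑ α ∈ degLEI n I k, c α + 1,
    add_pos_of_nonneg_of_pos (Finset.sum_nonneg fun α h => (H α h).1) one_pos,
    ∑ α ∈ degLEI n I k, τ α + monomial (0 + 0) 1, ∑ α ∈ degLEI n I k, σ α,
    (IsS.sum _ _ fun α h => (H α h).2.1).add (IsS.mono h0),
    IsS.sum _ _ fun α h => (H α h).2.2.1, ?_⟩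
  have : ∑ α ∈ degLEI n I k, C (c α) = ∑ α ∈ degLEI n I k,
      (monomial (α + α) 1 + τ α + (C R - ∑ v ∈ I, X v ^ 2) * σ α) :=
    Finset.sum_congr rfl fun α h => (H α h).2.2.2
  rw [Finset.sum_add_distrib, Finset.sum_add_distrib, ← Finset.mul_sum, ← map_sum] at this
  rw [C_add, this, NN]
  have e : (monomial (0 + 0) 1 : MvPolynomial (Fin n) ℝ) = 1 := by simp
  rw [e, C_1]
  ring

theorem NN_totalDegree (n : ℕ) (I : Finset (Fin n)) (d : ℕ) :
    (NN n I d).totalDegree ≤ 2 * d := by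
  unfold NN
  refine totalDegree_finsetSum_le fun γ hγ => ?_
  rw [totalDegree_monomial _ one_ne_zero, Finsupp.sum_fintype _ _ (by simp)]
  have := (mem_degLEI_iff.1 hγ).1
  simp [Finset.sum_add_distrib]; omega

theorem NN_vars (n : ℕ) (I : Finset (Fin n)) (d : ℕ) : (NN n I d).vars ⊆ I := by
  unfold NN
  refine (vars_sum_subset _ _).trans (Finset.biUnion_subset.2 fun γ hγ => ?_)
  rw [vars_monomial one_ne_zero]
  exact Finsupp.support_add.trans (by simpa using (mem_degLEI_iff.1 hγ).2)

theorem IsS.posDef {n : ℕ} {I : Finset (Fin n)} {d : ℕ} {f : MvPolynomial (Fin n) ℝ}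
    (hf : IsS n I d f) {c : ℝ} (hc : 0 < c) :
    ∃ G : Matrix ↥(degLEI n I d) ↥(degLEI n I d) ℝ, G.PosDef ∧
      quadFormI n I d G = C c * (NN n I d + f) := by
  obtain ⟨G, hG, rfl⟩ := hf
  refine ⟨c • (1 + G), (Matrix.PosDef.one.add_posSemidef hG).smul hc, ?_⟩
  rw [quadFormI_smul, quadFormI_add, quadFormI_one]

/-- Correlative sparsity with a ball constraint on each clique of variables:
if for every clique `j` some constraint `g_i` (`i ∈ J_j`) equals `R_j − ‖x(I_j)‖₂²` with
`R_j > 0`, then for every `j`, every `k ≥ max_{i ∈ J_j} ⌈g_i⌉` and every `c > 0` there exist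
symmetric positive definite matrices `G_0` (indexed by `ℕ^{I_j}_k`) and `G_i` (indexed by
`ℕ^{I_j}_{k-⌈g_i⌉}`, `i ∈ J_j`) with
`c = (v_k^{I_j})^T G_0 v_k^{I_j} + Σ_{i∈J_j} g_i (v_{k-⌈g_i⌉}^{I_j})^T G_i v_{k-⌈g_i⌉}^{I_j}`;
i.e. `ℝ^{>0} ⊆ Q_k°(g_{J_j})`. -/
theorem stmt10 (n p : ℕ) {ι : Type} [DecidableEq ι]
    (I : Fin p → Finset (Fin n)) (J : Fin p → Finset ι)
    (hdisj : ∀ j j' : Fin p, j ≠ j' → Disjoint (J j) (J j'))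
    (g : ι → MvPolynomial (Fin n) ℝ)
    (hvars : ∀ j : Fin p, ∀ i ∈ J j, (g i).vars ⊆ I j)
    (hball : ∀ j : Fin p, ∃ i ∈ J j, ∃ Rj : ℝ, 0 < Rj ∧
      g i = C Rj - ∑ v ∈ I j, X v ^ 2) :
    ∀ j : Fin p, ∀ k : ℕ, (∀ i ∈ J j, halfCeil (g i) ≤ k) → ∀ c : ℝ, 0 < c →
      ∃ G0 : Matrix ↥(degLEI n (I j) k) ↥(degLEI n (I j) k) ℝ, G0.PosDef ∧
      ∃ G : ∀ i : ι,
          Matrix ↥(degLEI n (I j) (k - halfCeil (g i)))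
            ↥(degLEI n (I j) (k - halfCeil (g i))) ℝ,
        (∀ i ∈ J j, (G i).PosDef) ∧
        (C c : MvPolynomial (Fin n) ℝ)
          = quadFormI n (I j) k G0
            + ∑ i ∈ J j, g i * quadFormI n (I j) (k - halfCeil (g i)) (G i) := by
  intro j k hk c hc
  obtain ⟨b, hb, R, hR, hgb⟩ := hball j
  have hb1 : halfCeil (g b) ≤ 1 := by
    have : (g b).totalDegree ≤ 2 := by
      rw [hgb]
      refine (totalDegree_sub _ _).trans (max_le (by simp) ?_)
      refine totalDegree_finsetSum_le fun v _ => ?_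
      rw [totalDegree_X_pow]
    unfold halfCeil; omega
  obtain ⟨c₀, hc₀, τ, σ, hτ, hσ, hE⟩ :=
    step_all (n := n) (I := I j) (k := k) (e := k - halfCeil (g b)) (by omega) hR
  rw [← hgb] at hE
  have hT : ∀ i, ∃ M : ℝ, 0 ≤ M ∧ (i ∈ J j →
      IsS n (I j) k (C M * NN n (I j) k - g i * NN n (I j) (k - halfCeil (g i)))) := by
    intro i
    by_cases hi : i ∈ J j
    · obtain ⟨M, h, h'⟩ := poly_bound (I := I j) (k := k)
        (g i * NN n (I j) (k - halfCeil (g i))) (by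
          refine (totalDegree_mul _ _).trans ?_
          have h1 := NN_totalDegree n (I j) (k - halfCeil (g i))
          have h2 := hk i hi
          have h3 : (g i).totalDegree ≤ 2 * halfCeil (g i) := by unfold halfCeil; omega
          omega)
        ((vars_mul _ _).trans (Finset.union_subset (hvars j i hi) (NN_vars _ _ _)))
      exact ⟨M, h, fun _ => h'⟩
    · exact ⟨0, le_rfl, fun h => absurd h hi⟩
  choose M hM hM' using hT
  set S : ℝ := ∑ i ∈ J j, M i with hS
  have hS0 : 0 ≤ S := Finset.sum_nonneg fun i _ => hM i
  have hsum := IsS.sum (J j) _ (fun i hi => hM' i hi)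
  rw [Finset.sum_sub_distrib, ← Finset.sum_mul, ← map_sum, ← hS] at hsum
  have hpos : 0 < (S + 1) * c₀ := by positivity
  set r : ℝ := c / ((S + 1) * c₀) with hr
  have hr0 : 0 < r := by positivity
  obtain ⟨G0, hG0, hG0e⟩ := (hsum.add (hτ.smul (c := S + 1) (by positivity))).posDef hr0
  have hG : ∀ i, ∃ G : Matrix ↥(degLEI n (I j) (k - halfCeil (g i)))
      ↥(degLEI n (I j) (k - halfCeil (g i))) ℝ, G.PosDef ∧
      quadFormI n (I j) (k - halfCeil (g i)) G = C r * (NN n (I j) (k - halfCeil (g i)) +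
        if i = b then C (S + 1) * σ else 0) := by
    intro i
    by_cases hi : i = b
    · subst hi
      simpa using (hσ.smul (c := S + 1) (by positivity)).posDef hr0
    · simpa [hi] using (IsS.zero (n := n) (I := I j) (d := k - halfCeil (g i))).posDef hr0
  choose G hGp hGe using hG
  refine ⟨G0, hG0, G, fun i _ => hGp i, ?_⟩
  have hlast : ∑ i ∈ J j, g i * quadFormI n (I j) (k - halfCeil (g i)) (G i) =
      C r * (∑ i ∈ J j, g i * NN n (I j) (k - halfCeil (g i)) + g b * (C (S + 1) * σ)) := by
    have : g b * (C (S + 1) * σ) = ∑ i ∈ J j, g i * (if i = b then C (S + 1) * σ else 0) := by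
      simp [hb]
    rw [this, ← Finset.sum_add_distrib, Finset.mul_sum]
    refine Finset.sum_congr rfl fun i _ => ?_
    rw [hGe]; ring
  have hcc : c = r * ((S + 1) * c₀) := by rw [hr]; field_simp
  rw [hlast, hG0e]
  have : (C c : MvPolynomial (Fin n) ℝ) = C r * ((C S + 1) * C c₀) := by
    rw [← C_1, ← C_add, ← C_mul, ← C_mul, ← hcc]
  rw [this, hE, C_add, C_1]
  ring
end

section
/- Let p, ζ be positive integers, let C_j and A_{1,j},…,A_{ζ,j} be real symmetric matrices of size s_j for each j ∈ {1,…,p}, let a_1,…,a_p > 0, b ∈ ℝ^ζ, and define ψ(y) := b·y + Σ_{j=1}^p a_j·λ_min(C_j − Σ_{i=1}^ζ y_i A_{i,j}) and τ := inf{ Σ_{j=1}^p ⟨C_j,X_j⟩ : X_j symmetric positive semidefinite, ⟨A_{i,j},X_j⟩ summed over j equals b_i for all i }. Fix z̄ ∈ ℝ^ζ, and for each j let u_{1,j},…,u_{r_j,j} be unit eigenvectors of C_j − Σ_i z̄_i A_{i,j} with eigenvalue λ_min(C_j − Σ_i z̄_i A_{i,j}), and let ξ_{i,j} ≥ 0 satisfy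 Σ_{i=1}^{r_j} ξ_{i,j} = 1. Set X*_j := a_j Σ_{i=1}^{r_j} ξ_{i,j} u_{i,j} u_{i,j}^T and suppose Σ_{j=1}^p ⟨A_{i,j},X*_j⟩ = b_i for all i. Then each X*_j is positive semidefinite and Σ_{j=1}^p ⟨C_j, X*_j⟩ = ψ(z̄); in particular, if ψ(z̄) = τ then (X*_1,…,X*_p) attains the infimum τ. -/
/-- The smallest eigenvalue of a real symmetric matrix, expressed as the infimum of the
Rayleigh quotient over the unit sphere. -/
noncomputable def lamMin {d : ℕ} (U : Matrix (Fin d) (Fin d) ℝ) : ℝ :=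
  sInf {r : ℝ | ∃ v : Fin d → ℝ, (∑ i, v i ^ 2) = 1 ∧ r = ∑ i, ∑ j, v i * U i j * v j}

/-- The set of values of the primal SDP with `p` groups of symmetric psd matrix variables. -/
def primalVals (p ζ : ℕ) (sdim : Fin p → ℕ)
    (Cm : ∀ j : Fin p, Matrix (Fin (sdim j)) (Fin (sdim j)) ℝ)
    (A : ∀ (_ : Fin ζ) (j : Fin p), Matrix (Fin (sdim j)) (Fin (sdim j)) ℝ)
    (b : Fin ζ → ℝ) : Set ℝ :=
  {t : ℝ | ∃ X : ∀ j : Fin p, Matrix (Fin (sdim j)) (Fin (sdim j)) ℝ,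
    (∀ j, (X j).IsSymm) ∧ (∀ j, (X j).PosSemidef) ∧
    (∀ i, (∑ j, (A i j * X j).trace) = b i) ∧ t = ∑ j, (Cm j * X j).trace}

/-- Extracting an optimal primal solution from unit eigenvectors associated
to the smallest eigenvalues: if `X*_j = a_j Σ_i ξ_{i,j} u_{i,j} u_{i,j}^T` is built from unit
`λ_min`-eigenvectors of `C_j − Σ_i z̄_i A_{i,j}` with convex weights `ξ_{i,j}` and satisfies
the affine constraints, then each `X*_j` is psd, `Σ_j ⟨C_j, X*_j⟩ = ψ(z̄)`, and if
`ψ(z̄) = τ` then the primal infimum `τ` is attained. -/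
theorem stmt17 (p ζ : ℕ) (hp : 0 < p) (hζ : 0 < ζ)
    (sdim : Fin p → ℕ) (hsdim : ∀ j, 0 < sdim j)
    (Cm : ∀ j : Fin p, Matrix (Fin (sdim j)) (Fin (sdim j)) ℝ)
    (A : ∀ (_ : Fin ζ) (j : Fin p), Matrix (Fin (sdim j)) (Fin (sdim j)) ℝ)
    (hCm : ∀ j, (Cm j).IsSymm) (hA : ∀ i j, (A i j).IsSymm)
    (a : Fin p → ℝ) (ha : ∀ j, 0 < a j) (b : Fin ζ → ℝ)
    (zbar : Fin ζ → ℝ)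
    (r : Fin p → ℕ)
    (u : ∀ j : Fin p, Fin (r j) → Fin (sdim j) → ℝ)
    (hunit : ∀ j i, (∑ v, u j i v ^ 2) = 1)
    (heig : ∀ j i, (Cm j - ∑ i', zbar i' • A i' j).mulVec (u j i)
      = lamMin (Cm j - ∑ i', zbar i' • A i' j) • u j i)
    (ξ : ∀ j : Fin p, Fin (r j) → ℝ)
    (hξ0 : ∀ j i, 0 ≤ ξ j i) (hξ1 : ∀ j, (∑ i, ξ j i) = 1)
    (Xstar : ∀ j : Fin p, Matrix (Fin (sdim j)) (Fin (sdim j)) ℝ)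
    (hXstar : ∀ j, Xstar j = a j • ∑ i, ξ j i • Matrix.vecMulVec (u j i) (u j i))
    (hfeas : ∀ i, (∑ j, (A i j * Xstar j).trace) = b i) :
    (∀ j, (Xstar j).PosSemidef) ∧
    ((∑ j, (Cm j * Xstar j).trace)
      = (∑ i, b i * zbar i) + ∑ j, a j * lamMin (Cm j - ∑ i, zbar i • A i j)) ∧
    (((∑ i, b i * zbar i) + (∑ j, a j * lamMin (Cm j - ∑ i, zbar i • A i j))
        = sInf (primalVals p ζ sdim Cm A b) →
      sInf (primalVals p ζ sdim Cm A b) ∈ primalVals p ζ sdim Cm A b)) := by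
  have hpsd : ∀ j, (Xstar j).PosSemidef := by
    intro j
    rw [hXstar j]
    refine Matrix.PosSemidef.smul ?_ (ha j).le
    refine Matrix.posSemidef_sum _ fun i _ => ?_
    refine Matrix.PosSemidef.smul ?_ (hξ0 j i)
    simpa using Matrix.posSemidef_vecMulVec_self_star (u j i)
  have hM : ∀ j, ((Cm j - ∑ i, zbar i • A i j) * Xstar j).trace
      = a j * lamMin (Cm j - ∑ i, zbar i • A i j) := by
    intro j
    have ht : ∀ i, (Matrix.vecMulVec (u j i) (u j i)).trace = 1 := by
      intro i
      rw [Matrix.trace_vecMulVec, ← hunit j i]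
      simp [dotProduct, sq]
    rw [hXstar j, Matrix.mul_smul, Matrix.trace_smul, Matrix.mul_sum, Matrix.trace_sum, smul_eq_mul]
    congr 1
    have h2 : ∀ i, ((Cm j - ∑ i, zbar i • A i j) *
        (ξ j i • Matrix.vecMulVec (u j i) (u j i))).trace
        = ξ j i * lamMin (Cm j - ∑ i, zbar i • A i j) := by
      intro i
      rw [Matrix.mul_smul, Matrix.trace_smul, Matrix.mul_vecMulVec, heig j i,
        Matrix.smul_vecMulVec, Matrix.trace_smul, ht i]
      simp
    rw [Finset.sum_congr rfl fun i _ => h2 i, ← Finset.sum_mul, hξ1 j, one_mul]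
  have hval : (∑ j, (Cm j * Xstar j).trace)
      = (∑ i, b i * zbar i) + ∑ j, a j * lamMin (Cm j - ∑ i, zbar i • A i j) := by
    have h3 : ∀ j, (Cm j * Xstar j).trace = (∑ i, (A i j * Xstar j).trace * zbar i)
        + a j * lamMin (Cm j - ∑ i, zbar i • A i j) := by
      intro j
      rw [← hM j, Matrix.sub_mul, Matrix.trace_sub, Matrix.sum_mul, Matrix.trace_sum]
      simp [Matrix.trace_smul, mul_comm (zbar _)]
    rw [Finset.sum_congr rfl fun j _ => h3 j, Finset.sum_add_distrib, Finset.sum_comm]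
    congr 1
    refine Finset.sum_congr rfl fun i _ => ?_
    rw [← Finset.sum_mul, hfeas i]
  refine ⟨hpsd, hval, fun h => ?_⟩
  refine ⟨Xstar, fun j => ?_, hpsd, hfeas, ?_⟩
  · have := (hpsd j).isHermitian
    simpa [Matrix.IsHermitian, Matrix.IsSymm, Matrix.conjTranspose_eq_transpose_of_trivial] using this
  · rw [hval, h]
end
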